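/- Let c_d = π^{d/2} / ( 12^d Γ(d/2 + 1) ). For every dimension d ≥ 1, every N ≥ 1 and every integer n ≥ 1, if X_1, …, X_N are i.i.d. uniformly distributed on [0,1]^d, then P( ρ(X_N, X) > 2/n ) ≤ c_d^{−1} n^d exp( − N c_d n^{−d} ). -/

import Mathlib

open MeasureTheory

/-- The unit cube `[0,1]^d` in Euclidean space. -/
def unitCube (d : ℕ) : Set (EuclideanSpace ℝ (Fin d)) :=
  {y | ∀ i, y i ∈ Set.Icc (0 : ℝ) 1}

/-- The uniform distribution on `[0,1]^d` (normalized Lebesgue measure). -/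
noncomputable def uniformCube (d : ℕ) : Measure (EuclideanSpace ℝ (Fin d)) :=
  volume.restrict (unitCube d)

/-- The covering radius `ρ(X_N, X) = sup_{x ∈ [0,1]^d} min_{k ≤ N} ‖x - X_k‖`. -/
noncomputable def cubeCovRad (d : ℕ) {N : ℕ} (xs : Fin N → EuclideanSpace ℝ (Fin d)) : ℝ :=
  ⨆ x : unitCube d, ⨅ k : Fin N, dist (x : EuclideanSpace ℝ (Fin d)) (xs k)

lemma unitCube_preim (d : ℕ) : unitCube d =
    (WithLp.ofLp : EuclideanSpace ℝ (Fin d) → (Fin d → ℝ)) ⁻¹' (Set.univ.pi fun _ => Set.Icc (0:ℝ) 1) := by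
  ext y; simp only [unitCube, Set.mem_setOf_eq, Set.mem_preimage, Set.mem_pi, Set.mem_univ, true_imp_iff]

lemma unitCube_meas (d : ℕ) : MeasurableSet (unitCube d) := by
  rw [unitCube_preim]
  exact (PiLp.volume_preserving_ofLp (Fin d)).measurable
    (MeasurableSet.univ_pi fun _ => measurableSet_Icc)

lemma unitCube_vol (d : ℕ) : volume (unitCube d) = 1 := by
  rw [unitCube_preim, (PiLp.volume_preserving_ofLp (Fin d)).measure_preimage
    (MeasurableSet.univ_pi fun _ => measurableSet_Icc).nullMeasurableSet]
  rw [volume_pi_pi]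
  simp

instance uniformCube_prob (d : ℕ) : IsProbabilityMeasure (uniformCube d) :=
  ⟨by simp [uniformCube, unitCube_vol]⟩

/-- Coordinatewise sign change. -/
noncomputable def signFlip (d : ℕ) (s : Fin d → Bool) :
    EuclideanSpace ℝ (Fin d) ≃ₗᵢ[ℝ] EuclideanSpace ℝ (Fin d) :=
  LinearIsometryEquiv.piLpCongrRight 2
    (fun i => if s i then LinearIsometryEquiv.neg ℝ else LinearIsometryEquiv.refl ℝ ℝ)

lemma signFlip_apply (d : ℕ) (s : Fin d → Bool) (v : EuclideanSpace ℝ (Fin d)) (i : Fin d) :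
    signFlip d s v i = if s i then - v i else v i := by
  simp only [signFlip, LinearIsometryEquiv.piLpCongrRight_apply]
  split_ifs <;> simp

lemma ball_inter_cube (d : ℕ) (x : EuclideanSpace ℝ (Fin d)) (hx : x ∈ unitCube d) (r : ℝ)
    (hr : r ≤ 1 / 2) :
    volume (Metric.ball (0 : EuclideanSpace ℝ (Fin d)) r) ≤
      2 ^ d * uniformCube d (Metric.ball x r) := by
  classical
  set A : Set (EuclideanSpace ℝ (Fin d)) :=
    (fun v => x + v) ⁻¹' (Metric.ball x r ∩ unitCube d) with hA
  have hAm : MeasurableSet A :=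
    (measurable_const_add x) (Metric.isOpen_ball.measurableSet.inter (unitCube_meas d))
  have hAv : volume A = uniformCube d (Metric.ball x r) := by
    rw [hA, measure_preimage_add, uniformCube,
      Measure.restrict_apply Metric.isOpen_ball.measurableSet]
  have hsub : Metric.ball (0 : EuclideanSpace ℝ (Fin d)) r ⊆
      ⋃ s : Fin d → Bool, signFlip d s ⁻¹' A := by
    intro v hv
    have hv' : ‖v‖ < r := by simpa using hv
    -- flip when the sign of `v i` points to the wrong side
    refine Set.mem_iUnion.2 ⟨fun i => decide ((x i ≤ 1/2 ∧ v i < 0) ∨ (1/2 < x i ∧ 0 < v i)), ?_⟩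
    refine ⟨?_, ?_⟩
    · simp [hv']
    · intro i
      have h1 : |v i| < r := lt_of_le_of_lt (by simpa using PiLp.norm_apply_le v i) hv'
      have h2 := hx i
      rw [abs_lt] at h1
      rw [PiLp.add_apply, signFlip_apply]
      simp only [decide_eq_true_eq]
      obtain ⟨h3, h4⟩ := h2
      constructor <;> split_ifs with h <;> grind
  calc volume (Metric.ball (0 : EuclideanSpace ℝ (Fin d)) r)
      ≤ volume (⋃ s : Fin d → Bool, signFlip d s ⁻¹' A) := measure_mono hsub
    _ ≤ ∑ s : Fin d → Bool, volume (signFlip d s ⁻¹' A) := measure_iUnion_fintype_le _ _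
    _ = ∑ s : Fin d → Bool, volume A := by
        refine Finset.sum_congr rfl fun s _ => ?_
        exact (signFlip d s).measurePreserving.measure_preimage hAm.nullMeasurableSet
    _ = _ := by simp [hAv]

lemma ball_lower (d : ℕ) (hd : 1 ≤ d) (x : EuclideanSpace ℝ (Fin d)) (hx : x ∈ unitCube d) (r : ℝ)
    (hr0 : 0 < r) (hr : r ≤ 1 / 2) :
    (r / 2) ^ d * (Real.pi ^ ((d : ℝ) / 2) / Real.Gamma ((d : ℝ) / 2 + 1)) ≤
      (uniformCube d).real (Metric.ball x r) := by
  have : Nonempty (Fin d) := ⟨⟨0, hd⟩⟩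
  have hG : 0 < Real.Gamma ((d : ℝ) / 2 + 1) := Real.Gamma_pos_of_pos (by positivity)
  have h := ball_inter_cube d x hx r hr
  rw [EuclideanSpace.volume_ball] at h
  have h' := ENNReal.toReal_mono (ENNReal.mul_ne_top (by simp) (measure_ne_top _ _)) h
  have hpi : Real.pi ^ ((d : ℝ) / 2) = √Real.pi ^ d := by
    rw [Real.sqrt_eq_rpow, ← Real.rpow_natCast, ← Real.rpow_mul Real.pi_pos.le]
    congr 1; ring
  simp only [Fintype.card_fin, ENNReal.toReal_mul, ENNReal.toReal_pow,
    ENNReal.toReal_ofReal hr0.le] at h'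
  rw [ENNReal.toReal_ofReal (by positivity)] at h'
  rw [hpi, div_pow, Measure.real, div_mul_eq_mul_div, div_le_iff₀ (by positivity)]
  simpa [mul_comm] using h'

/-- A maximal separated set. -/
lemma exists_net (d : ℕ) (r q : ℝ) (hq : 0 < q)
    (hb : ∀ x ∈ unitCube d, q ≤ (uniformCube d).real (Metric.ball x r)) :
    ∃ S : Finset (EuclideanSpace ℝ (Fin d)), (∀ y ∈ S, y ∈ unitCube d) ∧ (S.card : ℝ) * q ≤ 1 ∧
      ∀ x ∈ unitCube d, ∃ y ∈ S, dist x y < 2 * r := by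
  classical
  let P : Finset (EuclideanSpace ℝ (Fin d)) → Prop := fun S =>
    (∀ y ∈ S, y ∈ unitCube d) ∧ ∀ y ∈ S, ∀ z ∈ S, y ≠ z → 2 * r ≤ dist y z
  have hcard : ∀ S, P S → (S.card : ℝ) * q ≤ 1 := by
    intro S hS
    have hdisj : Set.PairwiseDisjoint (↑S : Set (EuclideanSpace ℝ (Fin d)))
        (fun y => Metric.ball y r) := by
      intro y hy z hz hyz
      exact Metric.ball_disjoint_ball (by linarith [hS.2 y hy z hz hyz])
    calc (S.card : ℝ) * q = ∑ y ∈ S, q := by simp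
      _ ≤ ∑ y ∈ S, (uniformCube d).real (Metric.ball y r) :=
          Finset.sum_le_sum fun y hy => hb y (hS.1 y hy)
      _ = (uniformCube d).real (⋃ y ∈ S, Metric.ball y r) :=
          (measureReal_biUnion_finset hdisj fun _ _ => Metric.isOpen_ball.measurableSet).symm
      _ ≤ 1 := measureReal_le_one
  let T : Set ℕ := {m | ∃ S, P S ∧ S.card = m}
  have hT : T.Nonempty := ⟨0, ∅, by simp [P], rfl⟩
  have hTb : BddAbove T := by
    refine ⟨⌈1 / q⌉₊, ?_⟩
    rintro m ⟨S, hS, rfl⟩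
    have := (le_div_iff₀ hq).2 (hcard S hS)
    exact_mod_cast this.trans (Nat.le_ceil _)
  obtain ⟨S, hS, hSm⟩ := Nat.sSup_mem hT hTb
  refine ⟨S, hS.1, hcard S hS, ?_⟩
  by_contra! hcon
  obtain ⟨x, hx, hxS⟩ := hcon
  by_cases hxm : x ∈ S
  · have h1 := hxS x hxm
    have h2 : Metric.ball x r = ∅ := Metric.ball_eq_empty.2 (by simp at h1; linarith)
    have := hb x hx
    simp [h2] at this
    linarith
  · have hP : P (insert x S) := by
      refine ⟨?_, ?_⟩
      · intro y hy
        rcases Finset.mem_insert.1 hy with rfl | hy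
        · exact hx
        · exact hS.1 y hy
      · intro y hy z hz hyz
        rcases Finset.mem_insert.1 hy with rfl | hy' <;> rcases Finset.mem_insert.1 hz with rfl | hz'
        · exact absurd rfl hyz
        · exact hxS z hz'
        · rw [dist_comm]; exact hxS y hy'
        · exact hS.2 y hy' z hz' hyz
    have := le_csSup hTb (show S.card + 1 ∈ T from ⟨_, hP, Finset.card_insert_of_notMem hxm⟩)
    omega

lemma tail_bound (d N : ℕ) (hN : 1 ≤ N) (r q : ℝ) (hr : 0 < r) (hq : 0 < q)
    (hb : ∀ x ∈ unitCube d, q ≤ (uniformCube d).real (Metric.ball x r)) :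
    (Measure.pi fun _ : Fin N => uniformCube d)
        {xs : Fin N → EuclideanSpace ℝ (Fin d) | 4 * r < cubeCovRad d xs} ≤
      ENNReal.ofReal (q⁻¹ * Real.exp (-N * q)) := by
  obtain ⟨S, hS, hc, hcov⟩ := exists_net d r q hq hb
  have : Nonempty (Fin N) := ⟨⟨0, hN⟩⟩
  have : Nonempty (unitCube d) := ⟨⟨0, fun i => by simp⟩⟩
  have hsub : {xs : Fin N → EuclideanSpace ℝ (Fin d) | 4 * r < cubeCovRad d xs} ⊆
      ⋃ y ∈ S, Set.univ.pi fun _ : Fin N => (Metric.ball y r)ᶜ := by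
    intro xs hxs
    by_contra hcon
    simp only [Set.mem_iUnion, Set.mem_pi, Set.mem_univ, Set.mem_compl_iff, forall_true_left,
      not_exists, not_forall, not_not] at hcon
    refine absurd (show 4 * r < cubeCovRad d xs from hxs) (not_lt.2 ?_)
    refine ciSup_le fun x => ?_
    obtain ⟨y, hy, hxy⟩ := hcov x x.2
    obtain ⟨k, hk⟩ := hcon y hy
    refine (ciInf_le ⟨0, ?_⟩ k).trans ?_
    · rintro _ ⟨j, rfl⟩; exact dist_nonneg
    · have := dist_triangle (x : EuclideanSpace ℝ (Fin d)) y (xs k)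
      rw [Metric.mem_ball, dist_comm] at hk
      linarith
  have hone : ∀ y ∈ S, (Measure.pi fun _ : Fin N => uniformCube d)
      (Set.univ.pi fun _ : Fin N => (Metric.ball y r)ᶜ) ≤ ENNReal.ofReal (Real.exp (-N * q)) := by
    intro y hy
    rw [Measure.pi_pi]
    simp only [Finset.prod_const, Finset.card_univ, Fintype.card_fin]
    have h1 : uniformCube d (Metric.ball y r)ᶜ ≤ ENNReal.ofReal (Real.exp (-q)) := by
      rw [← ofReal_measureReal]
      apply ENNReal.ofReal_le_ofReal
      rw [probReal_compl_eq_one_sub Metric.isOpen_ball.measurableSet]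
      linarith [Real.add_one_le_exp (-q), hb y (hS y hy)]
    calc _ ≤ ENNReal.ofReal (Real.exp (-q)) ^ N := by gcongr
      _ = _ := by
        rw [← ENNReal.ofReal_pow (Real.exp_pos _).le, ← Real.exp_nat_mul]
        congr 2; ring
  calc _ ≤ _ := measure_mono hsub
    _ ≤ ∑ y ∈ S, _ := measure_biUnion_finset_le _ _
    _ ≤ ∑ y ∈ S, ENNReal.ofReal (Real.exp (-N * q)) := Finset.sum_le_sum hone
    _ = ENNReal.ofReal (S.card * Real.exp (-N * q)) := by
      rw [ENNReal.ofReal_mul (by positivity)]; simp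
    _ ≤ _ := by
      apply ENNReal.ofReal_le_ofReal
      gcongr
      rw [← one_div]
      exact (le_div_iff₀ hq).2 hc

/-- with `c_d = π^{d/2}/(12^d Γ(d/2+1))`, for i.i.d. uniform points on the
cube, `P(ρ(X_N, X) > 2/n) ≤ c_d⁻¹ n^d exp(-N c_d n^{-d})`. -/
theorem stmt_19 (d : ℕ) (hd : 1 ≤ d) (N : ℕ) (hN : 1 ≤ N) (n : ℕ) (hn : 1 ≤ n) :
    (Measure.pi fun _ : Fin N => uniformCube d)
        {xs : Fin N → EuclideanSpace ℝ (Fin d) | 2 / (n : ℝ) < cubeCovRad d xs} ≤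
      ENNReal.ofReal
        ((Real.pi ^ ((d : ℝ) / 2) / (12 ^ d * Real.Gamma ((d : ℝ) / 2 + 1)))⁻¹ * (n : ℝ) ^ d *
          Real.exp (-(N : ℝ) * (Real.pi ^ ((d : ℝ) / 2) / (12 ^ d * Real.Gamma ((d : ℝ) / 2 + 1))) *
            ((n : ℝ) ^ d)⁻¹)) := by
  have hG : 0 < Real.Gamma ((d : ℝ) / 2 + 1) := Real.Gamma_pos_of_pos (by positivity)
  have hn0 : (1 : ℝ) ≤ n := by exact_mod_cast hn
  have hnp : (0 : ℝ) < n := by linarith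
  set V : ℝ := Real.pi ^ ((d : ℝ) / 2) / Real.Gamma ((d : ℝ) / 2 + 1) with hV
  have hVp : 0 < V := by have := Real.pi_pos; positivity
  have hc : Real.pi ^ ((d : ℝ) / 2) / (12 ^ d * Real.Gamma ((d : ℝ) / 2 + 1)) = V / 12 ^ d := by
    rw [hV, div_div, mul_comm]
  rw [hc]
  set q : ℝ := V / 12 ^ d * ((n : ℝ) ^ d)⁻¹ with hqdef
  have hq : 0 < q := by positivity
  have hb : ∀ x ∈ unitCube d, q ≤ (uniformCube d).real (Metric.ball x (1 / (2 * n))) := by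
    intro x hx
    refine le_trans ?_ (ball_lower d hd x hx (1 / (2 * n)) (by positivity) ?_)
    · rw [← hV, hqdef]
      have : V / 12 ^ d * ((n : ℝ) ^ d)⁻¹ = (1 / (12 * n)) ^ d * V := by
        rw [div_pow, mul_pow]; field_simp; simp
      rw [this, div_div]
      gcongr ?_ ^ d * V
      exact one_div_le_one_div_of_le (by positivity) (by linarith)
    · rw [div_le_div_iff₀ (by positivity) (by norm_num)]; linarith
  have := tail_bound d N hN (1 / (2 * n)) q (by positivity) hq hb
  have e1 : 4 * (1 / (2 * (n : ℝ))) = 2 / n := by field_simp; norm_num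
  have e2 : (V / 12 ^ d)⁻¹ * (n : ℝ) ^ d = q⁻¹ := by rw [hqdef, mul_inv, inv_inv]
  rw [e1] at this
  rw [e2, mul_assoc (-(N : ℝ)), ← hqdef]
  exact this
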